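/- Let τ² = 2√5/(√5 − 1) and let 𝓛 : [−1,1] → ℝ be given by 𝓛(t) = max{0, 2τ²(1+t)(2 − τ²(1−t))}. Let φ = (1+√5)/2, and let C ⊂ S² be the 12-point vertex set of the regular icosahedron, consisting of the vectors (0, ±1, ±φ)/√(1+φ²), (±1, ±φ, 0)/√(1+φ²), and (±φ, 0, ±1)/√(1+φ²) with all choices of signs. Then the uniform probability measure ν = (1/12) Σ_{x∈C} δ_x minimizes the energy I_𝓛(μ) = ∫∫ 𝓛(⟨x,y⟩) dμ(x)dμ(y) over all Borel probability measures μ on S²: for every Borel probability measure μ on S², I_𝓛(μ) ≥ I_𝓛(ν). -/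

import Mathlib

/-!
Write `a = 1/√5`. Since `τ² = 2/(1 - a)`, the kernel is
`𝓛(t) = 2τ⁴ max(0, (1+t)(t-a))` on `[-1,1]`. It is bounded below there by the quartic
`h(t) = 2τ⁴/(1+a)² · (1+t)(t+a)²(t-a)`, with equality at `±1` and `±a`, the inner products
of the icosahedron (`quartic_le_causalKernelIco`).

Up to the factor `2τ⁴/(1+a)²`, the quartic equals
`(t⁴ - 1/5) + (1+a)(t³ - 3t/5) + (a - 1/5)(t² - 1/3) + (2/5)(1+a) t + (2/15)(1+a)`,
and each nonconstant summand is a positive definite kernel on `S²`: it is written explicitly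
as `∑ᵢ wᵢ fᵢ(x) fᵢ(y)` with `wᵢ ≥ 0`, whose energy is `∑ᵢ wᵢ (∫ fᵢ)² ≥ 0`.
Hence every probability measure has energy at least `2τ⁴/(1+a)² · (2/15)(1+a)`, which is
`𝓛(1)/12` (`lower_bound`). Distinct vertices of the icosahedron have inner product at most `a`,
where `𝓛` vanishes, so the uniform measure on the vertices has energy exactly `𝓛(1)/12`.
-/

open MeasureTheory Metric
open scoped RealInnerProductSpace

noncomputable section

/-- The unit sphere `S^{d-1}` in `ℝ^d` with the standard inner product. -/
abbrev Sph (d : ℕ) := Metric.sphere (0 : EuclideanSpace ℝ (Fin d)) 1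

/-- The uniform (rotation-invariant) Borel probability measure `σ` on the sphere
`S^{d-1}`, obtained by normalizing the canonical measure on the unit sphere induced
by the Lebesgue measure. -/
def sphσ (d : ℕ) : Measure (Sph d) :=
  (((volume : Measure (EuclideanSpace ℝ (Fin d))).toSphere) Set.univ)⁻¹ •
    ((volume : Measure (EuclideanSpace ℝ (Fin d))).toSphere)

variable {d : ℕ}

/-- The energy integral `I_f(μ) = ∫∫ f (⟨x,y⟩) dμ(x) dμ(y)` of a Borel measure `μ`
on the sphere `S^{d-1}`. -/
def energy (f : ℝ → ℝ) (μ : Measure (Sph d)) : ℝ :=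
  ∫ x, ∫ y, f ⟪(x : EuclideanSpace ℝ (Fin d)), (y : EuclideanSpace ℝ (Fin d))⟫ ∂μ ∂μ

/-- The uniform probability measure `(1/|C|) ∑_{x ∈ C} δ_x` on a finite set
`C ⊆ S^{d-1}`. -/
def unifOn (C : Finset (Sph d)) : Measure (Sph d) :=
  (C.card : ENNReal)⁻¹ • ∑ x ∈ C, Measure.dirac x

/-- Evaluation of a polynomial in `d` variables at a point of the sphere. -/
def evalPt (P : MvPolynomial (Fin d) ℝ) (x : Sph d) : ℝ :=
  MvPolynomial.eval (fun i => (x : EuclideanSpace ℝ (Fin d)) i) P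

/-- `C` is a spherical `t`-design: averaging any polynomial of total degree at most
`t` over `C` gives its mean over the sphere with respect to the uniform measure. -/
def IsSphDesign (d t : ℕ) (C : Finset (Sph d)) : Prop :=
  C.Nonempty ∧ ∀ P : MvPolynomial (Fin d) ℝ, P.totalDegree ≤ t →
    (∑ x ∈ C, evalPt P x) / (C.card : ℝ) = ∫ x, evalPt P x ∂(sphσ d)

/-- The set `A(C) = {⟨x,y⟩ : x, y ∈ C, x ≠ y}` of inner products between distinct
points of `C`. -/
def innerProds (C : Finset (Sph d)) : Set ℝ :=
  {t | ∃ x ∈ C, ∃ y ∈ C, x ≠ y ∧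
    ⟪(x : EuclideanSpace ℝ (Fin d)), (y : EuclideanSpace ℝ (Fin d))⟫ = t}

/-- `C` is a tight spherical `M`-design: it is a spherical `M`-design, and either
`M = 2m` and `A(C)` has exactly `m` elements, or `M = 2m - 1` and `A(C)` has exactly
`m` elements, one of which is `-1`. -/
def IsTightSphDesign (d M : ℕ) (C : Finset (Sph d)) : Prop :=
  IsSphDesign d M C ∧
    ((∃ m, M = 2 * m ∧ (innerProds C).ncard = m) ∨
     (∃ m, M + 1 = 2 * m ∧ (innerProds C).ncard = m ∧ (-1 : ℝ) ∈ innerProds C))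

/-- A function `h : [-1,1] → ℝ` is positive definite on `S^{d-1}` if all matrices
`(h(⟨x_i, x_j⟩))_{i,j}` arising from points of the sphere are positive semidefinite. -/
def IsPosDefOn (d : ℕ) (h : ℝ → ℝ) : Prop :=
  ∀ (N : ℕ) (x : Fin N → Sph d) (c : Fin N → ℂ),
    0 ≤ (∑ i, ∑ j,
      (h ⟪(x i : EuclideanSpace ℝ (Fin d)), (x j : EuclideanSpace ℝ (Fin d))⟫ : ℂ)
        * c i * (starRingEnd ℂ) (c j)).re

/-- The golden ratio `(1 + √5)/2`. -/
def φgold : ℝ := (1 + Real.sqrt 5) / 2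

/-- The normalizing factor `√(1 + φ²)`. -/
def icoNorm : ℝ := Real.sqrt (1 + φgold ^ 2)

/-- The 12-point vertex set of the regular icosahedron in `S²`: the unit vectors
`(0, ±1, ±φ)/√(1+φ²)`, `(±1, ±φ, 0)/√(1+φ²)`, `(±φ, 0, ±1)/√(1+φ²)`. -/
def icosahedron : Set (EuclideanSpace ℝ (Fin 3)) :=
  {v | ∃ a b : ℝ, (a = 1 ∨ a = -1) ∧ (b = 1 ∨ b = -1) ∧
    ((v 0 = 0 ∧ v 1 = a / icoNorm ∧ v 2 = b * φgold / icoNorm) ∨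
     (v 0 = a / icoNorm ∧ v 1 = b * φgold / icoNorm ∧ v 2 = 0) ∨
     (v 0 = a * φgold / icoNorm ∧ v 1 = 0 ∧ v 2 = b / icoNorm))}

/-- The parameter `τ² = 2√5/(√5 - 1)`, chosen so that `𝓛_τ(1/√5) = 0`. -/
def τsq : ℝ := 2 * Real.sqrt 5 / (Real.sqrt 5 - 1)

/-- The causal variational kernel `𝓛_τ(t) = max {0, 2τ²(1+t)(2 - τ²(1-t))}` with
`τ² = 2√5/(√5 - 1)`. -/
def causalKernelIco (t : ℝ) : ℝ := max 0 (2 * τsq * (1 + t) * (2 - τsq * (1 - t)))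

/-! ### Energies as integrals over the product -/

/-- The inner product of two points of `S²`, as a function on `S² × S²`. -/
def ip (z : Sph 3 × Sph 3) : ℝ :=
  ⟪(z.1 : EuclideanSpace ℝ (Fin 3)), (z.2 : EuclideanSpace ℝ (Fin 3))⟫

lemma continuous_ip : Continuous ip := by
  unfold ip; fun_prop

lemma ip_eq (z : Sph 3 × Sph 3) :
    ip z = z.1.1 0 * z.2.1 0 + z.1.1 1 * z.2.1 1 + z.1.1 2 * z.2.1 2 := by
  simp [ip, PiLp.inner_apply, Fin.sum_univ_three]
  ring

lemma sph_sq (x : Sph 3) : x.1 0 ^ 2 + x.1 1 ^ 2 + x.1 2 ^ 2 = 1 := by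
  have h : ‖x.1‖ = 1 := by simp
  have h2 := EuclideanSpace.real_norm_sq_eq x.1
  rw [h] at h2
  simp [Fin.sum_univ_three] at h2
  linarith

lemma ip_mem (z : Sph 3 × Sph 3) : -1 ≤ ip z ∧ ip z ≤ 1 := by
  have h1 := sph_sq z.1
  have h2 := sph_sq z.2
  rw [ip_eq]
  constructor
  · nlinarith [sq_nonneg (z.1.1 0 + z.2.1 0), sq_nonneg (z.1.1 1 + z.2.1 1),
      sq_nonneg (z.1.1 2 + z.2.1 2)]
  · nlinarith [sq_nonneg (z.1.1 0 - z.2.1 0), sq_nonneg (z.1.1 1 - z.2.1 1),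
      sq_nonneg (z.1.1 2 - z.2.1 2)]

lemma integrable_of_cont {X : Type*} [TopologicalSpace X] [CompactSpace X] [MeasurableSpace X]
    [OpensMeasurableSpace X] (μ : Measure X) [IsFiniteMeasure μ]
    {g : X → ℝ} (hg : Continuous g) : Integrable g μ :=
  hg.integrable_of_hasCompactSupport (HasCompactSupport.of_compactSpace g)

lemma energy_eq_prod (μ : Measure (Sph 3)) [IsProbabilityMeasure μ] {f : ℝ → ℝ}
    (hf : Continuous f) : energy f μ = ∫ z, f (ip z) ∂(μ.prod μ) := by
  rw [integral_prod (fun z => f (ip z)) (integrable_of_cont _ (hf.comp continuous_ip))]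
  rfl

/-! ### Positive definite kernels of degree at most four -/

/-- A kernel of the form `∑ᵢ wᵢ fᵢ(x) fᵢ(y)` with nonnegative weights has nonnegative energy. -/
lemma energy_nonneg (μ : Measure (Sph 3)) [IsProbabilityMeasure μ] {n : ℕ}
    (w : Fin n → ℝ) (hw : ∀ i, 0 ≤ w i) (f : Fin n → Sph 3 → ℝ) (hf : ∀ i, Continuous (f i))
    (k : Sph 3 × Sph 3 → ℝ) (hk : ∀ z, k z = ∑ i, w i * (f i z.1 * f i z.2)) :
    0 ≤ ∫ z, k z ∂(μ.prod μ) := by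
  simp_rw [hk]
  rw [integral_finsetSum]
  · refine Finset.sum_nonneg fun i _ => ?_
    rw [integral_const_mul, integral_prod_mul]
    exact mul_nonneg (hw i) (mul_self_nonneg _)
  · intro i _
    have := hf i
    exact integrable_of_cont _ (by fun_prop)

lemma energy_one (μ : Measure (Sph 3)) [IsProbabilityMeasure μ] :
    0 ≤ ∫ z, ip z ∂(μ.prod μ) := by
  refine energy_nonneg μ ![1, 1, 1] ?_ ![fun x => x.1 0, fun x => x.1 1, fun x => x.1 2] ?_ _ ?_
  · intro i; fin_cases i <;> simp
  · intro i; fin_cases i <;> simp <;> fun_prop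
  · intro z
    simp [Fin.sum_univ_succ, ip_eq]
    ring

/-- The features are the components of the trace-free tensor `x ⊗ x - δ/3`. -/
lemma energy_two (μ : Measure (Sph 3)) [IsProbabilityMeasure μ] :
    0 ≤ ∫ z, (ip z ^ 2 - 1 / 3) ∂(μ.prod μ) := by
  refine energy_nonneg μ ![1, 1, 1, 2, 2, 2] ?_
    ![fun x => x.1 0 ^ 2 - 1 / 3, fun x => x.1 1 ^ 2 - 1 / 3, fun x => x.1 2 ^ 2 - 1 / 3,
      fun x => x.1 0 * x.1 1, fun x => x.1 0 * x.1 2, fun x => x.1 1 * x.1 2] ?_ _ ?_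
  · intro i; fin_cases i <;> simp
  · intro i; fin_cases i <;> simp <;> fun_prop
  · intro z
    have h1 := sph_sq z.1
    have h2 := sph_sq z.2
    simp [Fin.sum_univ_succ, ip_eq]
    linear_combination (1 / 3) * h1 + (1 / 3) * h2

/-- The features are the components of the trace-free part of `x ⊗ x ⊗ x`; the weights count
the index triples giving the same component. -/
lemma energy_three (μ : Measure (Sph 3)) [IsProbabilityMeasure μ] :
    0 ≤ ∫ z, (ip z ^ 3 - 3 / 5 * ip z) ∂(μ.prod μ) := by
  refine energy_nonneg μ ![1, 1, 1, 3, 3, 3, 3, 3, 3, 6] ?_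
    ![fun x => x.1 0 ^ 3 - 3 / 5 * x.1 0, fun x => x.1 1 ^ 3 - 3 / 5 * x.1 1,
      fun x => x.1 2 ^ 3 - 3 / 5 * x.1 2,
      fun x => x.1 0 * x.1 1 ^ 2 - 1 / 5 * x.1 0, fun x => x.1 0 * x.1 2 ^ 2 - 1 / 5 * x.1 0,
      fun x => x.1 1 * x.1 0 ^ 2 - 1 / 5 * x.1 1, fun x => x.1 1 * x.1 2 ^ 2 - 1 / 5 * x.1 1,
      fun x => x.1 2 * x.1 0 ^ 2 - 1 / 5 * x.1 2, fun x => x.1 2 * x.1 1 ^ 2 - 1 / 5 * x.1 2,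
      fun x => x.1 0 * x.1 1 * x.1 2] ?_ _ ?_
  · intro i; fin_cases i <;> simp
  · intro i; fin_cases i <;> simp <;> fun_prop
  · intro z
    have h1 := sph_sq z.1
    have h2 := sph_sq z.2
    simp [Fin.sum_univ_succ, ip_eq]
    linear_combination (3 / 5) * (z.1.1 0 * z.2.1 0 + z.1.1 1 * z.2.1 1 + z.1.1 2 * z.2.1 2)
      * (h1 + h2)

/-- The features are the components of `x ⊗ x ⊗ x ⊗ x` minus its average over the sphere, whose
nonzero entries are `1/5` and `1/15`; the weights are the multinomial coefficients. -/
lemma energy_four (μ : Measure (Sph 3)) [IsProbabilityMeasure μ] :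
    0 ≤ ∫ z, (ip z ^ 4 - 1 / 5) ∂(μ.prod μ) := by
  refine energy_nonneg μ ![1, 1, 1, 6, 6, 6, 4, 4, 4, 4, 4, 4, 12, 12, 12] ?_
    ![fun x => x.1 0 ^ 4 - 1 / 5, fun x => x.1 1 ^ 4 - 1 / 5, fun x => x.1 2 ^ 4 - 1 / 5,
      fun x => x.1 0 ^ 2 * x.1 1 ^ 2 - 1 / 15, fun x => x.1 0 ^ 2 * x.1 2 ^ 2 - 1 / 15,
      fun x => x.1 1 ^ 2 * x.1 2 ^ 2 - 1 / 15,
      fun x => x.1 0 ^ 3 * x.1 1, fun x => x.1 0 ^ 3 * x.1 2, fun x => x.1 1 ^ 3 * x.1 0,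
      fun x => x.1 1 ^ 3 * x.1 2, fun x => x.1 2 ^ 3 * x.1 0, fun x => x.1 2 ^ 3 * x.1 1,
      fun x => x.1 0 ^ 2 * x.1 1 * x.1 2, fun x => x.1 0 * x.1 1 ^ 2 * x.1 2,
      fun x => x.1 0 * x.1 1 * x.1 2 ^ 2] ?_ _ ?_
  · intro i; fin_cases i <;> simp
  · intro i; fin_cases i <;> simp <;> fun_prop
  · intro z
    have h1 := sph_sq z.1
    have h2 := sph_sq z.2
    simp [Fin.sum_univ_succ, ip_eq]
    linear_combination
      (1 / 5) * (z.1.1 0 ^ 2 + z.1.1 1 ^ 2 + z.1.1 2 ^ 2 + 1) * h1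
      + (1 / 5) * (z.2.1 0 ^ 2 + z.2.1 1 ^ 2 + z.2.1 2 ^ 2 + 1) * h2

/-! ### The quartic minorant and the lower bound -/

/-- The number `a = 1/√5`, written as `√5/5`. -/
def ia : ℝ := Real.sqrt 5 / 5

lemma ia_sq : ia ^ 2 = 1 / 5 := by
  unfold ia
  rw [div_pow, Real.sq_sqrt (by norm_num)]
  norm_num

lemma ia_bounds : 1 / 5 < ia ∧ ia < 1 / 2 := by
  have h : 0 ≤ ia := by unfold ia; positivity
  constructor <;> nlinarith [ia_sq]

lemma τsq_mul : τsq * (1 - ia) = 2 := by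
  have h5 : Real.sqrt 5 ^ 2 = 5 := Real.sq_sqrt (by norm_num)
  have h : Real.sqrt 5 - 1 ≠ 0 := by
    intro h0
    have : Real.sqrt 5 = 1 := by linarith
    rw [this] at h5; norm_num at h5
  unfold τsq ia
  field_simp
  linear_combination -h5

lemma causalKernelIco_eq (t : ℝ) :
    causalKernelIco t = max 0 (2 * τsq ^ 2 * ((1 + t) * (t - ia))) := by
  unfold causalKernelIco
  congr 1
  linear_combination -2 * τsq * (1 + t) * τsq_mul

lemma continuous_causal : Continuous causalKernelIco := by
  unfold causalKernelIco; fun_prop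

lemma causal_eq_zero {t : ℝ} (h0 : -1 ≤ t) (h1 : t ≤ ia) : causalKernelIco t = 0 := by
  rw [causalKernelIco_eq]
  apply max_eq_left
  apply mul_nonpos_of_nonneg_of_nonpos (by positivity)
  exact mul_nonpos_of_nonneg_of_nonpos (by linarith) (by linarith)

lemma quartic_le_causalKernelIco {t : ℝ} (h0 : -1 ≤ t) (h1 : t ≤ 1) :
    2 * τsq ^ 2 / (1 + ia) ^ 2 * ((1 + t) * (t + ia) ^ 2 * (t - ia)) ≤ causalKernelIco t := by
  have hb := ia_bounds
  have hp : 0 < 1 + ia := by linarith [hb.1]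
  rcases le_total t ia with h | h
  · rw [causal_eq_zero h0 h]
    apply mul_nonpos_of_nonneg_of_nonpos (by positivity)
    exact mul_nonpos_of_nonneg_of_nonpos (mul_nonneg (by linarith) (sq_nonneg _)) (by linarith)
  · rw [causalKernelIco_eq]
    refine le_max_of_le_right ?_
    have e : 2 * τsq ^ 2 / (1 + ia) ^ 2 * ((1 + t) * (t + ia) ^ 2 * (t - ia))
        = (2 * τsq ^ 2 * ((1 + t) * (t - ia))) * ((t + ia) / (1 + ia)) ^ 2 := by
      field_simp
    rw [e]
    apply mul_le_of_le_one_right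
    · exact mul_nonneg (by positivity) (mul_nonneg (by linarith) (by linarith))
    · apply pow_le_one₀
      · exact div_nonneg (by linarith [hb.1]) hp.le
      · rw [div_le_one hp]; linarith

lemma causal_one : causalKernelIco 1 / 12 =
    2 * τsq ^ 2 / (1 + ia) ^ 2 * (2 / 15 * (1 + ia)) := by
  have hb := ia_bounds
  have hp : 1 + ia ≠ 0 := by linarith [hb.1]
  rw [causalKernelIco_eq, max_eq_right]
  · field_simp
    linear_combination -30 * τsq ^ 2 * ia_sq
  · have : 0 ≤ 1 - ia := by linarith
    positivity

lemma lower_bound (μ : Measure (Sph 3)) [IsProbabilityMeasure μ] :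
    causalKernelIco 1 / 12 ≤ energy causalKernelIco μ := by
  have hb := ia_bounds
  have hc := continuous_ip
  rw [energy_eq_prod μ continuous_causal, causal_one]
  have hL : ∫ z, 2 * τsq ^ 2 / (1 + ia) ^ 2 *
      ((1 + ip z) * (ip z + ia) ^ 2 * (ip z - ia)) ∂(μ.prod μ)
      ≤ ∫ z, causalKernelIco (ip z) ∂(μ.prod μ) := by
    apply integral_mono
    · exact integrable_of_cont _ (by fun_prop)
    · exact integrable_of_cont _ (continuous_causal.comp hc)
    · intro z
      exact quartic_le_causalKernelIco (ip_mem z).1 (ip_mem z).2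
  refine le_trans ?_ hL
  rw [integral_const_mul]
  apply mul_le_mul_of_nonneg_left _ (by positivity)
  have e : ∀ z, (1 + ip z) * (ip z + ia) ^ 2 * (ip z - ia) =
      (ip z ^ 4 - 1 / 5) + (1 + ia) * (ip z ^ 3 - 3 / 5 * ip z)
      + (ia - 1 / 5) * (ip z ^ 2 - 1 / 3) + 2 / 5 * (1 + ia) * ip z
      + 2 / 15 * (1 + ia) := by
    intro z
    linear_combination (-ip z ^ 2 - (1 + ia) * ip z - ia) * ia_sq
  simp_rw [e]
  rw [integral_add, integral_add, integral_add, integral_add, integral_const_mul,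
    integral_const_mul, integral_const_mul, integral_const]
  · have p1 := mul_nonneg (by linarith : 0 ≤ 2 / 5 * (1 + ia)) (energy_one μ)
    have p2 := mul_nonneg (by linarith : 0 ≤ ia - 1 / 5) (energy_two μ)
    have p3 := mul_nonneg (by linarith : 0 ≤ 1 + ia) (energy_three μ)
    have p4 := energy_four μ
    simp only [probReal_univ, one_smul]
    linarith
  all_goals exact integrable_of_cont _ (by fun_prop)

/-! ### Inner products of icosahedron vertices -/

lemma φgold_sq : φgold ^ 2 = φgold + 1 := by
  have h5 : Real.sqrt 5 ^ 2 = 5 := Real.sq_sqrt (by norm_num)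
  unfold φgold
  linear_combination h5 / 4

lemma one_lt_φgold : 1 < φgold := by
  have : 1 < Real.sqrt 5 := by
    rw [Real.lt_sqrt] <;> norm_num
  unfold φgold; linarith

lemma icoNorm_sq : icoNorm ^ 2 = 1 + φgold ^ 2 := by
  unfold icoNorm; exact Real.sq_sqrt (by positivity)

lemma ia_mul : ia * icoNorm ^ 2 = φgold := by
  have h5 : Real.sqrt 5 ^ 2 = 5 := Real.sq_sqrt (by norm_num)
  rw [icoNorm_sq, φgold_sq]
  unfold ia φgold
  linear_combination h5 / 10

/-- Inner products of distinct unnormalized vertices with the same zero coordinate. -/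
lemma sign_same {a b c d : ℝ} (ha : a = 1 ∨ a = -1) (hb : b = 1 ∨ b = -1)
    (hc : c = 1 ∨ c = -1) (hd : d = 1 ∨ d = -1) (hne : ¬ (a = c ∧ b = d)) :
    a * c + b * d * φgold ^ 2 ≤ φgold := by
  have h1 := one_lt_φgold
  rw [φgold_sq]
  rcases ha with rfl | rfl <;> rcases hb with rfl | rfl <;>
  rcases hc with rfl | rfl <;> rcases hd with rfl | rfl <;>
  first
  | exact absurd ⟨rfl, rfl⟩ hne
  | linarith

/-- Inner products of unnormalized vertices with different zero coordinates. -/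
lemma sign_cross {a b : ℝ} (ha : a = 1 ∨ a = -1) (hb : b = 1 ∨ b = -1) :
    a * b * φgold ≤ φgold := by
  have h1 := one_lt_φgold
  rcases ha with rfl | rfl <;> rcases hb with rfl | rfl <;> linarith

lemma ico_ip {x y : Sph 3} (hx : x.1 ∈ icosahedron) (hy : y.1 ∈ icosahedron) (hne : x ≠ y) :
    ip (x, y) ≤ ia := by
  have hN : 0 < icoNorm := by
    unfold icoNorm; positivity
  -- After clearing the normalization, the bound `⟨x, y⟩ ≤ a` becomes `⟨Nx, Ny⟩ ≤ φ`.
  have key : ∀ s : ℝ, s ≤ φgold → s / icoNorm ^ 2 ≤ ia := by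
    intro s hs
    rw [div_le_iff₀ (by positivity), ia_mul]; exact hs
  have hne' : ¬ (x.1 0 = y.1 0 ∧ x.1 1 = y.1 1 ∧ x.1 2 = y.1 2) := by
    rintro ⟨h0, h1, h2⟩
    apply hne
    ext i
    fin_cases i <;> assumption
  rw [ip_eq]
  obtain ⟨a, b, ha, hb, hv⟩ := hx
  obtain ⟨c, d, hc, hd, hw⟩ := hy
  rcases hv with ⟨x0, x1, x2⟩ | ⟨x0, x1, x2⟩ | ⟨x0, x1, x2⟩ <;>
  rcases hw with ⟨y0, y1, y2⟩ | ⟨y0, y1, y2⟩ | ⟨y0, y1, y2⟩ <;>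
  rw [x0, x1, x2, y0, y1, y2] at hne' ⊢
  · refine le_trans (le_of_eq ?_) (key _ (sign_same ha hb hc hd ?_))
    · ring
    · rintro ⟨rfl, rfl⟩; exact hne' ⟨rfl, rfl, rfl⟩
  · exact le_trans (le_of_eq (by ring)) (key _ (sign_cross ha hd))
  · exact le_trans (le_of_eq (by ring)) (key _ (sign_cross hb hd))
  · exact le_trans (le_of_eq (by ring)) (key _ (sign_cross hb hc))
  · refine le_trans (le_of_eq ?_) (key _ (sign_same ha hb hc hd ?_))
    · ring
    · rintro ⟨rfl, rfl⟩; exact hne' ⟨rfl, rfl, rfl⟩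
  · exact le_trans (le_of_eq (by ring)) (key _ (sign_cross ha hc))
  · exact le_trans (le_of_eq (by ring)) (key _ (sign_cross hb hd))
  · exact le_trans (le_of_eq (by ring)) (key _ (sign_cross ha hc))
  · refine le_trans (le_of_eq ?_) (key _ (sign_same hb ha hd hc ?_))
    · ring
    · rintro ⟨rfl, rfl⟩; exact hne' ⟨rfl, rfl, rfl⟩

/-! ### Energy of the icosahedron -/

/-- causal variational principle, icosahedron case. The uniform
probability measure on the vertices of the regular icosahedron minimizes the energy
`I_𝓛(μ) = ∫∫ 𝓛(⟨x,y⟩) dμ dμ` for the causal kernel with `τ² = 2√5/(√5 - 1)` over all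
Borel probability measures on `S²`. -/
theorem icosahedron_minimizes_causal_energy
    (F : Finset (Sph 3))
    (hF : ∀ x : Sph 3, x ∈ F ↔ (x : EuclideanSpace ℝ (Fin 3)) ∈ icosahedron)
    (hcard : F.card = 12)
    (μ : Measure (Sph 3)) [IsProbabilityMeasure μ] :
    energy causalKernelIco (unifOn F) ≤ energy causalKernelIco μ := by
  refine le_trans (le_of_eq ?_) (lower_bound μ)
  have hself : ∀ x : Sph 3, ip (x, x) = 1 := by
    intro x
    rw [ip_eq, ← sph_sq x]; ring
  have hsum : ∀ x ∈ F, ∑ y ∈ F, causalKernelIco (ip (x, y)) = causalKernelIco 1 := by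
    intro x hx
    rw [Finset.sum_eq_single_of_mem x hx, hself]
    intro y hy hne
    exact causal_eq_zero (ip_mem _).1 (ico_ip ((hF x).1 hx) ((hF y).1 hy) hne.symm)
  have integral_unif : ∀ g : Sph 3 → ℝ, ∫ x, g x ∂(unifOn F) = (1 / 12) * ∑ x ∈ F, g x := by
    intro g
    unfold unifOn
    rw [integral_smul_measure, integral_finsetSum_measure]
    · simp [hcard]
    · intro i _
      exact integrable_dirac (by simp)
  unfold energy
  rw [integral_unif]
  simp_rw [integral_unif]
  rw [← Finset.mul_sum]
  change 1 / 12 * (1 / 12 * ∑ x ∈ F, ∑ y ∈ F, causalKernelIco (ip (x, y))) = _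
  rw [Finset.sum_congr rfl hsum, Finset.sum_const, hcard]
  simp
  ring
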